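/- Fix q ∈ (0,1). Let A_q be the ℂ-algebra presented by two generators z, w subject to the single relation w·z = q²·z·w + (1 - q²)·1, realized as the quotient (RingQuot) of the free ℂ-algebra on two generators by this relation. Let S be the bounded operator on ℓ²(ℕ, ℂ) with S δ_m = √(1 - q^{2(m+1)}) · δ_{m+1}. Then there exists a ℂ-algebra homomorphism π from A_q to the algebra of bounded operators on ℓ²(ℕ, ℂ) with π(z) = S and π(w) = S*; in particular π(w) is the adjoint of π(z), so π is a *-representation of Pol(ℂ)_q. -/

import Mathlib

/-- `ℓ²(ℕ, ℂ)`. -/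
noncomputable abbrev QDisc.H : Type := lp (fun _ : ℕ => ℂ) 2

/-- The standard orthonormal basis vector `δ_m` of `ℓ²(ℕ, ℂ)`. -/
noncomputable def QDisc.δ (m : ℕ) : QDisc.H := lp.single 2 m (1 : ℂ)

/-- The generator `z` of the free algebra on two generators. -/
noncomputable def QDisc.z : FreeAlgebra ℂ (Fin 2) := FreeAlgebra.ι ℂ (0 : Fin 2)

/-- The generator `w` (playing the role of `z*`) of the free algebra on two generators. -/
noncomputable def QDisc.w : FreeAlgebra ℂ (Fin 2) := FreeAlgebra.ι ℂ (1 : Fin 2)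

/-- The defining relation `w z = q² z w + (1 - q²) 1` of `Pol(ℂ)_q` (relation (1)). -/
def QDisc.relPlane (q : ℝ) : FreeAlgebra ℂ (Fin 2) → FreeAlgebra ℂ (Fin 2) → Prop :=
  fun a b => a = QDisc.w * QDisc.z ∧
    b = ((q ^ 2 : ℝ) : ℂ) • (QDisc.z * QDisc.w) + ((1 - q ^ 2 : ℝ) : ℂ) • 1

namespace QDisc

open ContinuousLinearMap

theorem δ_apply (m k : ℕ) : (δ m : ℕ → ℂ) k = if k = m then 1 else 0 := by
  simp [δ, Pi.single_apply]

theorem inner_δ_left (m : ℕ) (x : H) : inner ℂ (δ m) x = x m := by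
  simp [δ, lp.inner_single_left]

section WeightedShift

variable {c : ℕ → ℝ} {S : H →L[ℂ] H}

/-- The adjoint of a weighted shift, in coordinates. -/
theorem adjoint_weightedShift_apply (hS : ∀ m, S (δ m) = (c m : ℂ) • δ (m + 1)) (x : H) (k : ℕ) :
    (adjoint S x : ℕ → ℂ) k = c k * x (k + 1) := by
  rw [← inner_δ_left, adjoint_inner_right, hS, inner_smul_left, inner_δ_left, Complex.conj_ofReal]

theorem adjoint_weightedShift_δ_zero (hS : ∀ m, S (δ m) = (c m : ℂ) • δ (m + 1)) :
    adjoint S (δ 0) = 0 := by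
  ext k
  simp [adjoint_weightedShift_apply hS, δ_apply]

theorem adjoint_weightedShift_δ_succ (hS : ∀ m, S (δ m) = (c m : ℂ) • δ (m + 1)) (m : ℕ) :
    adjoint S (δ (m + 1)) = (c m : ℂ) • δ m := by
  ext k
  rw [adjoint_weightedShift_apply hS, lp.coeFn_smul, Pi.smul_apply, δ_apply, δ_apply]
  by_cases h : k = m <;> simp [h]

theorem weightedShift_apply_zero (hS : ∀ m, S (δ m) = (c m : ℂ) • δ (m + 1)) (x : H) :
    (S x : ℕ → ℂ) 0 = 0 := by
  rw [← inner_δ_left, ← adjoint_inner_left, adjoint_weightedShift_δ_zero hS, inner_zero_left]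

theorem weightedShift_apply_succ (hS : ∀ m, S (δ m) = (c m : ℂ) • δ (m + 1)) (x : H) (k : ℕ) :
    (S x : ℕ → ℂ) (k + 1) = c k * x k := by
  rw [← inner_δ_left, ← adjoint_inner_left, adjoint_weightedShift_δ_succ hS, inner_smul_left,
    inner_δ_left, Complex.conj_ofReal]

/-- A weighted shift satisfies the relation of `Pol(ℂ)_q` as soon as its squared weights satisfy
the corresponding recursion. -/
theorem adjoint_mul_weightedShift (hS : ∀ m, S (δ m) = (c m : ℂ) • δ (m + 1)) {q : ℝ}
    (hc_zero : c 0 ^ 2 = 1 - q ^ 2)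
    (hc_succ : ∀ m, c (m + 1) ^ 2 = q ^ 2 * c m ^ 2 + (1 - q ^ 2)) :
    adjoint S * S = ((q ^ 2 : ℝ) : ℂ) • (S * adjoint S) + ((1 - q ^ 2 : ℝ) : ℂ) • 1 := by
  ext x k
  change (adjoint S (S x) : ℕ → ℂ) k =
    ((q ^ 2 : ℝ) : ℂ) * (S (adjoint S x) : ℕ → ℂ) k + ((1 - q ^ 2 : ℝ) : ℂ) * x k
  rw [adjoint_weightedShift_apply hS, weightedShift_apply_succ hS]
  cases k with
  | zero =>
    rw [weightedShift_apply_zero hS, ← hc_zero]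
    push_cast
    ring
  | succ k =>
    have h : (c (k + 1) : ℂ) ^ 2 = ((q ^ 2 : ℝ) : ℂ) * (c k : ℂ) ^ 2 + ((1 - q ^ 2 : ℝ) : ℂ) :=
      mod_cast hc_succ k
    rw [weightedShift_apply_succ hS, adjoint_weightedShift_apply hS]
    linear_combination (x (k + 1)) * h

end WeightedShift

end QDisc

open QDisc in
/-- The weighted shift `S δ_m = √(1 - q^{2(m+1)}) δ_{m+1}` and its adjoint define a
`*`-representation of `Pol(ℂ)_q = ℂ⟨z, w⟩ / (wz = q² zw + (1-q²))` on `ℓ²(ℕ, ℂ)`. -/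
theorem quantum_plane_algebra_representation
    (q : ℝ) (hq0 : 0 < q) (hq1 : q < 1)
    (S : H →L[ℂ] H)
    (hS : ∀ m : ℕ, S (δ m) = (Real.sqrt (1 - q ^ (2 * (m + 1))) : ℂ) • δ (m + 1)) :
    ∃ φ : RingQuot (relPlane q) →ₐ[ℂ] (H →L[ℂ] H),
      φ (RingQuot.mkAlgHom ℂ (relPlane q) z) = S ∧
      φ (RingQuot.mkAlgHom ℂ (relPlane q) w) = ContinuousLinearMap.adjoint S := by
  have hc : ∀ m : ℕ, Real.sqrt (1 - q ^ (2 * (m + 1))) ^ 2 = 1 - q ^ (2 * (m + 1)) := fun m =>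
    Real.sq_sqrt (sub_nonneg.2 (pow_le_one₀ hq0.le hq1.le))
  have hrel := adjoint_mul_weightedShift (c := fun m => Real.sqrt (1 - q ^ (2 * (m + 1)))) hS
    (q := q) (by simpa using hc 0) (fun m => by simp only [hc]; ring)
  refine ⟨RingQuot.liftAlgHom ℂ
    ⟨FreeAlgebra.lift ℂ ![S, ContinuousLinearMap.adjoint S], ?_⟩, ?_, ?_⟩
  · rintro _ _ ⟨rfl, rfl⟩
    simpa [z, w] using hrel
  · simp [z]
  · simp [w]
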